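/- There exists a constant C > 0 such that for all t > 0 and all f ∈ L¹(ℝ): ‖K₃(t,·) * f‖_{L^∞(ℝ)} ≤ C‖f‖_{L¹(ℝ)}, where * denotes convolution on ℝ. -/

import Mathlib

/-!
It suffices to bound `K₃(t, y)` uniformly in `t > 0` and `y`; Young's inequality `L¹ * L^∞ ⊆ L^∞`
does the rest.

Inside the frequency window `|η| ≤ η₀`, the symbol `e^{-2tη²} (χ ω / η) sin(tηω)` differs by a
bounded amount, uniformly in `t`, from the model symbol `4 e^{-2tη²} sin(4tη) / η`. Indeed
`|ω - 4| ≤ c η²`, so replacing `ω` by `4` in the phase costs `c t η² e^{-2tη²} ≤ c`, while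
`|χ ω - 4| = O(|η|)` compensates the factor `1 / η` (`abs_symbol_sub_model_le`). For the latter, the
bound `|χ - 1| ≤ 2|η| / η₀` follows from `χ = 1` near the origin.

The model symbol is even, so only the cosine part of the Fourier transform survives, and
`2 sin(4tη) cos(yη) = sin((4t+y)η) + sin((4t-y)η)` reduces the kernel to the integrals
`∫₀^R e^{-bη²} sin(aη) / η dη`. These are bounded by `3` (`abs_sine_integral_le`): the part
`η ≤ 1/|a|` contributes at most `1` because `|sin(aη)/η| ≤ |a|`, and beyond `1/|a|` an integration by
parts against the decreasing amplitude `e^{-bη²}/η` contributes at most `2`.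
-/

open MeasureTheory

noncomputable section

/-- The Japanese bracket `⟨x⟩ = √(1+x²)`. -/
def jb (x : ℝ) : ℝ := Real.sqrt (1 + x ^ 2)

/-- `μ₃ = 1/2 + π²/24`. -/
def mu3 : ℝ := 1 / 2 + Real.pi ^ 2 / 24

/-- `ω(η) = √(16 + (8μ₃ − 1)η²)`. -/
def omg (η : ℝ) : ℝ := Real.sqrt (16 + (8 * mu3 - 1) * η ^ 2)

/-- `(2π)^{-1/2}·ℱ⁻¹[g](y) = (2π)^{-1} ∫ g(η) e^{iyη} dη`, where `ℱ⁻¹` is the inverse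
Fourier transform with the convention `ℱ⁻¹g(y) = (2π)^{-1/2} ∫ g(η) e^{iyη} dη`. -/
def Kft (g : ℝ → ℝ) (y : ℝ) : ℂ :=
  (2 * Real.pi : ℂ)⁻¹ * ∫ η : ℝ, (g η : ℂ) * Complex.exp (Complex.I * ((η * y : ℝ) : ℂ))

/-- `K₁(t,y) = (2π)^{-1/2}·ℱ⁻¹[χ₁(η) e^{-2tη²} cos(tηω(η))](y)`. -/
def K1 (χ : ℝ → ℝ) (t : ℝ) : ℝ → ℂ :=
  Kft fun η => χ η * Real.exp (-2 * t * η ^ 2) * Real.cos (t * η * omg η)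

/-- `K₂(t,y) = (2π)^{-1/2}·ℱ⁻¹[e^{-2tη²} (ηχ₁(η)/ω(η)) sin(tηω(η))](y)`. -/
def K2 (χ : ℝ → ℝ) (t : ℝ) : ℝ → ℂ :=
  Kft fun η => Real.exp (-2 * t * η ^ 2) * (η * χ η / omg η) * Real.sin (t * η * omg η)

/-- `K₃(t,y) = (2π)^{-1/2}·ℱ⁻¹[e^{-2tη²} (χ₁(η)ω(η)/η) sin(tηω(η))](y)`. -/
def K3 (χ : ℝ → ℝ) (t : ℝ) : ℝ → ℂ :=
  Kft fun η => Real.exp (-2 * t * η ^ 2) * (χ η * omg η / η) * Real.sin (t * η * omg η)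

/-- `χ` is a smooth cutoff adapted to `η₀`: `0 ≤ χ ≤ 1`, `χ = 1` on `{|η| ≤ η₀/2}` and
`χ = 0` on `{|η| ≥ 3η₀/4}`. -/
def IsCutoff (η₀ : ℝ) (χ : ℝ → ℝ) : Prop :=
  ContDiff ℝ (⊤ : ℕ∞) χ ∧ (∀ η : ℝ, 0 ≤ χ η ∧ χ η ≤ 1) ∧
    (∀ η : ℝ, |η| ≤ η₀ / 2 → χ η = 1) ∧ (∀ η : ℝ, 3 * η₀ / 4 ≤ |η| → χ η = 0)

/-- The `L¹(ℝ)` norm of a complex-valued function. -/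
def L1norm (f : ℝ → ℂ) : ℝ := ∫ y : ℝ, ‖f y‖

/-- The `L²(ℝ)` norm of a complex-valued function. -/
def L2norm (f : ℝ → ℂ) : ℝ := Real.sqrt (∫ y : ℝ, ‖f y‖ ^ 2)

/-! ### The sine integral with a monotone weight -/

/-- Non-stationary phase for a nonnegative decreasing amplitude `g`: one integration by parts. -/
lemma abs_integral_mul_sin_le {g g' : ℝ → ℝ} {a c R : ℝ} (ha : 0 < a) (hcR : c ≤ R)
    (hg : ∀ x ∈ Set.Icc c R, HasDerivAt g (g' x) x) (hg' : ContinuousOn g' (Set.Icc c R))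
    (hneg : ∀ x ∈ Set.Icc c R, g' x ≤ 0) (hR : 0 ≤ g R) (hc : 0 ≤ g c) :
    |∫ x in c..R, g x * Real.sin (a * x)| ≤ 2 * g c / a := by
  have hu : Set.uIcc c R = Set.Icc c R := Set.uIcc_of_le hcR
  have hi : IntervalIntegrable g' volume c R := by
    apply ContinuousOn.intervalIntegrable; rwa [hu]
  have hv : ∀ x ∈ Set.uIcc c R,
      HasDerivAt (fun x => -Real.cos (a * x) / a) (Real.sin (a * x)) x := by
    intro x _
    have h1 : HasDerivAt (fun x : ℝ => a * x) a x := by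
      simpa using (hasDerivAt_id x).const_mul a
    have h2 := (h1.cos.neg).div_const a
    exact h2.congr_deriv (by field_simp)
  have key := intervalIntegral.integral_mul_deriv_eq_deriv_mul (u := g) (u' := g')
    (v := fun x => -Real.cos (a * x) / a) (v' := fun x => Real.sin (a * x))
    (by rw [hu]; exact hg) hv hi (by apply Continuous.intervalIntegrable; fun_prop)
  rw [key]
  have hvb : ∀ x, |-Real.cos (a * x) / a| ≤ 1 / a := by
    intro x
    rw [abs_div, abs_neg, abs_of_pos ha]
    gcongr
    exact Real.abs_cos_le_one _
  have h3 : |∫ x in c..R, g' x * (-Real.cos (a * x) / a)| ≤ (g c - g R) / a := by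
    have e : ∫ x in c..R, -g' x / a = (g c - g R) / a := by
      rw [intervalIntegral.integral_div, intervalIntegral.integral_neg,
        intervalIntegral.integral_eq_sub_of_hasDerivAt (by rw [hu]; exact hg) hi]
      ring
    rw [← e, ← Real.norm_eq_abs]
    apply intervalIntegral.norm_integral_le_of_norm_le hcR
    · refine Filter.Eventually.of_forall fun x hx => ?_
      have := hneg x (Set.Ioc_subset_Icc_self hx)
      rw [Real.norm_eq_abs, abs_mul, abs_of_nonpos this]
      calc -g' x * |-Real.cos (a * x) / a| ≤ -g' x * (1 / a) := by
            gcongr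
            · linarith
            · exact hvb x
        _ = -g' x / a := by ring
    · exact hi.neg.div_const a
  have h1 : |g R * (-Real.cos (a * R) / a)| ≤ g R / a := by
    rw [abs_mul, abs_of_nonneg hR]
    calc _ ≤ g R * (1 / a) := by gcongr; exact hvb R
      _ = _ := by ring
  have h2 : |g c * (-Real.cos (a * c) / a)| ≤ g c / a := by
    rw [abs_mul, abs_of_nonneg hc]
    calc _ ≤ g c * (1 / a) := by gcongr; exact hvb c
      _ = _ := by ring
  have e2 : 2 * g c / a = g R / a + g c / a + (g c - g R) / a := by ring
  rw [e2]
  refine (abs_sub _ _).trans ?_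
  refine add_le_add ((abs_sub _ _).trans (add_le_add h1 h2)) h3

lemma abs_exp_mul_sin_div_le {b : ℝ} (hb : 0 ≤ b) (a x : ℝ) :
    |Real.exp (-b * x ^ 2) * Real.sin (a * x) / x| ≤ |a| := by
  have h1 : Real.exp (-b * x ^ 2) ≤ 1 := Real.exp_le_one_iff.2 (by nlinarith [sq_nonneg x])
  rcases eq_or_ne x 0 with rfl | hx
  · simp
  rw [abs_div, div_le_iff₀ (abs_pos.2 hx), abs_mul, Real.abs_exp, ← abs_mul a x]
  calc _ ≤ 1 * |Real.sin (a * x)| := by gcongr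
    _ ≤ _ := by rw [one_mul]; exact Real.abs_sin_le_abs

lemma intervalIntegrable_exp_mul_sin_div {b : ℝ} (hb : 0 ≤ b) (a c d : ℝ) :
    IntervalIntegrable (fun x => Real.exp (-b * x ^ 2) * Real.sin (a * x) / x) volume c d := by
  refine (intervalIntegrable_const (c := |a|)).mono_fun ?_ ?_
  · exact Measurable.aestronglyMeasurable (by fun_prop)
  · refine Filter.Eventually.of_forall fun x => ?_
    change |_| ≤ |(|a|)|
    rw [abs_abs]
    exact abs_exp_mul_sin_div_le hb a x

lemma abs_sine_integral_le_of_pos {a b R : ℝ} (hb : 0 ≤ b) (hR : 0 < R) (ha : 0 < a) :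
    |∫ x in (0 : ℝ)..R, Real.exp (-b * x ^ 2) * Real.sin (a * x) / x| ≤ 3 := by
  have small : ∀ c : ℝ, 0 ≤ c → a * c ≤ 1 →
      |∫ x in (0 : ℝ)..c, Real.exp (-b * x ^ 2) * Real.sin (a * x) / x| ≤ 1 := by
    intro c hc hac
    have := intervalIntegral.norm_integral_le_of_norm_le_const (a := 0) (b := c) (C := |a|)
      (f := fun x => Real.exp (-b * x ^ 2) * Real.sin (a * x) / x)
      (fun x _ => abs_exp_mul_sin_div_le hb a x)
    rw [Real.norm_eq_abs, sub_zero, abs_of_pos ha, abs_of_nonneg hc] at this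
    exact this.trans hac
  rcases le_total (a * R) 1 with h | h
  · exact (small R hR.le h).trans (by norm_num)
  -- the oscillation only starts to help beyond the scale `1 / a`
  have hc0 : 0 < 1 / a := by positivity
  have hcR : 1 / a ≤ R := by rw [div_le_iff₀ ha]; linarith
  rw [← intervalIntegral.integral_add_adjacent_intervals (b := 1 / a)
    (intervalIntegrable_exp_mul_sin_div hb a _ _) (intervalIntegrable_exp_mul_sin_div hb a _ _)]
  have h1 := small (1 / a) hc0.le (by field_simp; exact le_rfl)
  have h2 := abs_integral_mul_sin_le (g := fun x => Real.exp (-b * x ^ 2) / x)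
    (g' := fun x => (Real.exp (-b * x ^ 2) * (-b * (2 * x)) * x - Real.exp (-b * x ^ 2)) / x ^ 2)
    ha hcR ?_ ?_ ?_ (by positivity) (by positivity)
  · have e : (fun x => Real.exp (-b * x ^ 2) / x * Real.sin (a * x)) =
        fun x => Real.exp (-b * x ^ 2) * Real.sin (a * x) / x := by ext x; ring
    rw [e] at h2
    have h3 : 2 * (Real.exp (-b * (1 / a) ^ 2) / (1 / a)) / a ≤ 2 := by
      have : Real.exp (-b * (1 / a) ^ 2) ≤ 1 :=
        Real.exp_le_one_iff.2 (by nlinarith [sq_nonneg (1 / a)])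
      have e3 : 2 * (Real.exp (-b * (1 / a) ^ 2) / (1 / a)) / a =
          2 * Real.exp (-b * (1 / a) ^ 2) := by field_simp
      rw [e3]; linarith
    refine (abs_add_le _ _).trans ?_
    linarith
  · intro x hx
    have hx0 : x ≠ 0 := (hc0.trans_le hx.1).ne'
    have d1 : HasDerivAt (fun x : ℝ => -b * x ^ 2) (-b * (2 * x)) x := by
      simpa using (hasDerivAt_pow 2 x).const_mul (-b)
    exact (d1.exp.div (hasDerivAt_id x) hx0).congr_deriv (by simp)
  · apply ContinuousOn.div
    · fun_prop
    · fun_prop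
    · intro x hx
      exact pow_ne_zero 2 (hc0.trans_le hx.1).ne'
  · intro x hx
    apply div_nonpos_of_nonpos_of_nonneg _ (sq_nonneg x)
    have := Real.exp_pos (-b * x ^ 2)
    have h4 : 0 ≤ b * x ^ 2 := by positivity
    nlinarith

/-- The bound on the Gaussian-damped sine integral is uniform in the damping `b`, the frequency `a`
and the endpoint `R`. -/
lemma abs_sine_integral_le {b R : ℝ} (hb : 0 ≤ b) (hR : 0 < R) (a : ℝ) :
    |∫ x in (0 : ℝ)..R, Real.exp (-b * x ^ 2) * Real.sin (a * x) / x| ≤ 3 := by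
  rcases lt_trichotomy a 0 with ha | rfl | ha
  · have := abs_sine_integral_le_of_pos hb hR (neg_pos.2 ha)
    simpa [neg_mul, Real.sin_neg, neg_div, intervalIntegral.integral_neg] using this
  · simp
  · exact abs_sine_integral_le_of_pos hb hR ha

/-! ### The model kernel -/

/-- The integrand of the model kernel, obtained by freezing `χ ω` and the speed `ω` at their common
value `4` at `η = 0`. -/
def modelIntegrand (t y η : ℝ) : ℂ :=
  ((4 * (Real.exp (-(2 * t) * η ^ 2) * Real.sin (4 * t * η) / η) : ℝ) : ℂ) *
    Complex.exp (Complex.I * ((η * y : ℝ) : ℂ))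

lemma norm_exp_I_mul_ofReal (x : ℝ) : ‖Complex.exp (Complex.I * (x : ℂ))‖ = 1 := by
  rw [mul_comm]; exact Complex.norm_exp_ofReal_mul_I x

lemma intervalIntegrable_modelIntegrand {t : ℝ} (ht : 0 < t) (y c d : ℝ) :
    IntervalIntegrable (modelIntegrand t y) volume c d := by
  refine (intervalIntegrable_const (c := 4 * |4 * t|)).mono_fun ?_ ?_
  · exact Measurable.aestronglyMeasurable (by unfold modelIntegrand; fun_prop)
  · refine Filter.Eventually.of_forall fun x => ?_
    change ‖modelIntegrand t y x‖ ≤ ‖4 * |4 * t|‖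
    rw [modelIntegrand, norm_mul, norm_exp_I_mul_ofReal, mul_one, Complex.norm_real,
      Real.norm_eq_abs, abs_mul, Real.norm_eq_abs, abs_mul 4 |4 * t|, abs_abs, Nat.abs_ofNat]
    exact mul_le_mul_of_nonneg_left (abs_exp_mul_sin_div_le (by positivity) _ _) (by norm_num)

lemma modelIntegrand_add_neg (t y η : ℝ) :
    modelIntegrand t y η + modelIntegrand t y (-η) =
      ((4 * (Real.exp (-(2 * t) * η ^ 2) * Real.sin ((4 * t + y) * η) / η +
        Real.exp (-(2 * t) * η ^ 2) * Real.sin ((4 * t - y) * η) / η) : ℝ) : ℂ) := by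
  have e1 : Complex.exp (Complex.I * ((η * y : ℝ) : ℂ)) +
      Complex.exp (Complex.I * ((-η * y : ℝ) : ℂ)) = ((2 * Real.cos (η * y) : ℝ) : ℂ) := by
    push_cast
    rw [Complex.two_cos]
    congr 2 <;> ring
  have e2 : 4 * (Real.exp (-(2 * t) * (-η) ^ 2) * Real.sin (4 * t * -η) / -η) =
      4 * (Real.exp (-(2 * t) * η ^ 2) * Real.sin (4 * t * η) / η) := by
    rw [mul_neg, Real.sin_neg, neg_sq, mul_neg, neg_div_neg_eq]
  unfold modelIntegrand
  rw [e2, ← mul_add, e1, ← Complex.ofReal_mul]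
  congr 1
  rw [add_mul, sub_mul, Real.sin_add, Real.sin_sub, mul_comm y η]
  ring

/-- The imaginary part of the model kernel is odd in `η` and drops out; the product formula turns
the real part into two sine integrals, of frequencies `4t ± y`. -/
lemma norm_integral_modelIntegrand_le {t R : ℝ} (ht : 0 < t) (hR : 0 < R) (y : ℝ) :
    ‖∫ η in (-R)..R, modelIntegrand t y η‖ ≤ 24 := by
  have hi := intervalIntegrable_modelIntegrand ht y
  have hneg : ∫ η in (-R)..0, modelIntegrand t y η =
      ∫ η in (0 : ℝ)..R, modelIntegrand t y (-η) := by
    rw [intervalIntegral.integral_comp_neg]; simp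
  have hi' : IntervalIntegrable (fun η => modelIntegrand t y (-η)) volume 0 R := by
    have := (hi 0 (-R)).comp_mul_left (c := -1)
    simpa using this
  have hb : 0 ≤ 2 * t := by positivity
  rw [← intervalIntegral.integral_add_adjacent_intervals (hi (-R) 0) (hi 0 R), hneg, add_comm,
    ← intervalIntegral.integral_add (hi 0 R) hi']
  simp_rw [modelIntegrand_add_neg]
  rw [intervalIntegral.integral_ofReal, Complex.norm_real, intervalIntegral.integral_const_mul,
    intervalIntegral.integral_add (intervalIntegrable_exp_mul_sin_div hb _ _ _)
      (intervalIntegrable_exp_mul_sin_div hb _ _ _), Real.norm_eq_abs, abs_mul, Nat.abs_ofNat]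
  have h1 := abs_sine_integral_le hb hR (4 * t + y)
  have h2 := abs_sine_integral_le hb hR (4 * t - y)
  have h3 := abs_add_le
    (∫ x in (0 : ℝ)..R, Real.exp (-(2 * t) * x ^ 2) * Real.sin ((4 * t + y) * x) / x)
    (∫ x in (0 : ℝ)..R, Real.exp (-(2 * t) * x ^ 2) * Real.sin ((4 * t - y) * x) / x)
  linarith

/-! ### Comparison with the model kernel -/

lemma mu3_coeff_pos : 0 < 8 * mu3 - 1 := by
  unfold mu3; nlinarith [sq_nonneg Real.pi]

lemma four_le_omg (η : ℝ) : 4 ≤ omg η := by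
  unfold omg
  apply Real.le_sqrt_of_sq_le
  nlinarith [mul_nonneg mu3_coeff_pos.le (sq_nonneg η)]

lemma omg_sub_four_le (η : ℝ) : omg η - 4 ≤ (8 * mu3 - 1) * η ^ 2 := by
  have h := four_le_omg η
  have hs : omg η ^ 2 = 16 + (8 * mu3 - 1) * η ^ 2 := by
    unfold omg
    exact Real.sq_sqrt (by nlinarith [mul_nonneg mu3_coeff_pos.le (sq_nonneg η)])
  nlinarith

lemma abs_sin_sub_sin_le (x y : ℝ) : |Real.sin x - Real.sin y| ≤ |x - y| := by
  rw [Real.sin_sub_sin, abs_mul, abs_mul, Nat.abs_ofNat]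
  have h1 : |Real.sin ((x - y) / 2)| ≤ |(x - y) / 2| := Real.abs_sin_le_abs
  have h2 := Real.abs_cos_le_one ((x + y) / 2)
  rw [abs_div, Nat.abs_ofNat] at h1
  nlinarith [abs_nonneg (Real.sin ((x - y) / 2)), abs_nonneg (Real.cos ((x + y) / 2))]

/-- Freezing `ω` inside the sine costs `t η²`, which the Gaussian absorbs; freezing `χ ω` costs
`O(|η|)`, which cancels the singularity `1 / η`. -/
lemma abs_symbol_sub_model_le {η₀ : ℝ} (hη₀ : 0 < η₀) {χ : ℝ → ℝ} (hχ : IsCutoff η₀ χ)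
    {t : ℝ} (ht : 0 < t) {η : ℝ} (hη : |η| ≤ η₀) :
    |Real.exp (-2 * t * η ^ 2) * (χ η * omg η / η) * Real.sin (t * η * omg η) -
      4 * (Real.exp (-(2 * t) * η ^ 2) * Real.sin (4 * t * η) / η)| ≤
      (4 + (8 * mu3 - 1) * η₀ ^ 2) * (8 * mu3 - 1) + ((8 * mu3 - 1) * η₀ + 8 / η₀) := by
  have hc := mu3_coeff_pos
  set c := 8 * mu3 - 1 with hcdef
  have hw4 := four_le_omg η
  have hwc : omg η - 4 ≤ c * η ^ 2 := omg_sub_four_le η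
  obtain ⟨-, h01, hone, -⟩ := hχ
  obtain ⟨hx0, hx1⟩ := h01 η
  have hηsq : η ^ 2 ≤ η₀ ^ 2 := by rw [← sq_abs η]; gcongr
  rcases eq_or_ne η 0 with h0 | h0
  · subst h0; simp; positivity
  have hη0 : 0 < |η| := abs_pos.2 h0
  set E := Real.exp (-(2 * t) * η ^ 2) with hE
  have hEe : Real.exp (-2 * t * η ^ 2) = E := by rw [hE]; congr 1; ring
  have hEpos : 0 < E := Real.exp_pos _
  have hE1 : E ≤ 1 := Real.exp_le_one_iff.2 (by nlinarith [mul_nonneg ht.le (sq_nonneg η)])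
  have hEt : E * (t * η ^ 2) ≤ 1 := by
    have h1 : t * η ^ 2 ≤ Real.exp (2 * t * η ^ 2) := by
      have := Real.add_one_le_exp (2 * t * η ^ 2)
      nlinarith [mul_nonneg ht.le (sq_nonneg η)]
    calc E * (t * η ^ 2) ≤ E * Real.exp (2 * t * η ^ 2) := by gcongr
      _ = 1 := by rw [hE, ← Real.exp_add]; simp
  have hchi : |χ η - 1| ≤ 2 / η₀ * |η| := by
    rcases le_total |η| (η₀ / 2) with h | h
    · rw [hone η h]; simp; positivity
    · have : 1 ≤ 2 / η₀ * |η| := by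
        rw [div_mul_eq_mul_div, le_div_iff₀ hη₀]; linarith
      rw [abs_sub_comm, abs_of_nonneg (by linarith)]; linarith
  rw [hEe]
  have split : E * (χ η * omg η / η) * Real.sin (t * η * omg η) -
      4 * (E * Real.sin (4 * t * η) / η) =
      E * (χ η * omg η) * ((Real.sin (t * η * omg η) - Real.sin (4 * t * η)) / η) +
      E * Real.sin (4 * t * η) * ((χ η * omg η - 4) / η) := by ring
  rw [split]
  refine (abs_add_le _ _).trans (add_le_add ?_ ?_)
  · have hs : |(Real.sin (t * η * omg η) - Real.sin (4 * t * η)) / η| ≤ t * (c * η ^ 2) := by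
      rw [abs_div, div_le_iff₀ hη0]
      refine (abs_sin_sub_sin_le _ _).trans ?_
      rw [show t * η * omg η - 4 * t * η = t * (omg η - 4) * η by ring, abs_mul,
        abs_of_nonneg (mul_nonneg ht.le (by linarith : 0 ≤ omg η - 4))]
      gcongr
    have hxw : χ η * omg η ≤ 4 + c * η₀ ^ 2 := by
      calc χ η * omg η ≤ 1 * omg η := by gcongr
        _ ≤ 4 + c * η ^ 2 := by linarith
        _ ≤ _ := by gcongr
    have hxw0 : 0 ≤ χ η * omg η := mul_nonneg hx0 (by linarith)
    rw [abs_mul, abs_of_nonneg (mul_nonneg hEpos.le hxw0)]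
    calc E * (χ η * omg η) * |(Real.sin (t * η * omg η) - Real.sin (4 * t * η)) / η|
        ≤ E * (4 + c * η₀ ^ 2) * (t * (c * η ^ 2)) := by gcongr
      _ = (4 + c * η₀ ^ 2) * c * (E * (t * η ^ 2)) := by ring
      _ ≤ (4 + c * η₀ ^ 2) * c * 1 := by gcongr
      _ = _ := mul_one _
  · have hs : |(χ η * omg η - 4) / η| ≤ c * η₀ + 8 / η₀ := by
      rw [abs_div, div_le_iff₀ hη0]
      rw [show χ η * omg η - 4 = χ η * (omg η - 4) + 4 * (χ η - 1) by ring]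
      refine (abs_add_le _ _).trans ?_
      rw [abs_mul, abs_mul, Nat.abs_ofNat, abs_of_nonneg hx0,
        abs_of_nonneg (by linarith : 0 ≤ omg η - 4)]
      have h1 : χ η * (omg η - 4) ≤ c * η₀ * |η| := by
        calc χ η * (omg η - 4) ≤ 1 * (c * η ^ 2) := by
              gcongr
          _ = c * |η| * |η| := by rw [← sq_abs η]; ring
          _ ≤ c * η₀ * |η| := by gcongr
      have h2 : 8 / η₀ * |η| = 4 * (2 / η₀ * |η|) := by ring
      rw [add_mul, h2]
      gcongr
    rw [abs_mul, abs_mul, abs_of_pos hEpos]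
    calc E * |Real.sin (4 * t * η)| * |(χ η * omg η - 4) / η|
        ≤ 1 * 1 * (c * η₀ + 8 / η₀) := by
          gcongr
          exact Real.abs_sin_le_one _
      _ = _ := by ring

/-- `K₃(t, ·)` is bounded uniformly in `t > 0`. -/
lemma exists_norm_K3_le {η₀ : ℝ} (hη₀ : 0 < η₀) {χ : ℝ → ℝ} (hχ : IsCutoff η₀ χ) :
    ∃ C : ℝ, 0 < C ∧ ∀ t : ℝ, 0 < t → ∀ y : ℝ, ‖K3 χ t y‖ ≤ C := by
  have hc := mu3_coeff_pos
  set M := (4 + (8 * mu3 - 1) * η₀ ^ 2) * (8 * mu3 - 1) + ((8 * mu3 - 1) * η₀ + 8 / η₀) with hM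
  have hM0 : 0 < M := by positivity
  refine ⟨M * (2 * η₀) + 24, by positivity, fun t ht y => ?_⟩
  set h : ℝ → ℂ := fun η =>
    ((Real.exp (-2 * t * η ^ 2) * (χ η * omg η / η) * Real.sin (t * η * omg η) : ℝ) : ℂ) *
      Complex.exp (Complex.I * ((η * y : ℝ) : ℂ)) with hh
  have hsupp : ∀ η, η ∉ Set.Ioc (-η₀) η₀ → h η = 0 := by
    intro η hη
    have : χ η = 0 := by
      apply hχ.2.2.2
      by_contra! hlt
      have := abs_lt.1 hlt
      exact hη ⟨by linarith, by linarith⟩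
    simp [hh, this]
  have hint : ∫ η, h η = ∫ η in (-η₀)..η₀, h η := by
    rw [intervalIntegral.integral_of_le (by linarith),
      setIntegral_eq_integral_of_forall_compl_eq_zero hsupp]
  have hdiff : ∀ η, |η| ≤ η₀ → ‖h η - modelIntegrand t y η‖ ≤ M := by
    intro η hη
    rw [hh, modelIntegrand, ← sub_mul, norm_mul, norm_exp_I_mul_ofReal, mul_one,
      ← Complex.ofReal_sub, Complex.norm_real]
    exact abs_symbol_sub_model_le hη₀ hχ ht hη
  have hmem : ∀ η ∈ Set.uIoc (-η₀) η₀, |η| ≤ η₀ := by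
    intro η hη
    rw [Set.uIoc_of_le (by linarith)] at hη
    exact abs_le.2 ⟨hη.1.le, hη.2⟩
  have hmeas : Measurable h := by
    have := hχ.1.continuous.measurable
    have : Measurable omg := by unfold omg; fun_prop
    rw [hh]; fun_prop
  have hmod := intervalIntegrable_modelIntegrand ht y (-η₀) η₀
  have hd : IntervalIntegrable (fun η => h η - modelIntegrand t y η) volume (-η₀) η₀ := by
    refine (intervalIntegrable_const (c := M)).mono_fun ?_ ?_
    · exact (hmeas.sub (by unfold modelIntegrand; fun_prop)).aestronglyMeasurable
    · filter_upwards [ae_restrict_mem measurableSet_uIoc] with η hη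
      rw [Real.norm_of_nonneg hM0.le]
      exact hdiff η (hmem η hη)
  have hsum : ∫ η in (-η₀)..η₀, h η = (∫ η in (-η₀)..η₀, (h η - modelIntegrand t y η)) +
      ∫ η in (-η₀)..η₀, modelIntegrand t y η := by
    rw [← intervalIntegral.integral_add hd hmod]; simp
  have hb1 : ‖∫ η in (-η₀)..η₀, (h η - modelIntegrand t y η)‖ ≤ M * (2 * η₀) := by
    have := intervalIntegral.norm_integral_le_of_norm_le_const
      (fun η hη => hdiff η (hmem η hη))
    rwa [show η₀ - -η₀ = 2 * η₀ by ring, abs_of_pos (by positivity : 0 < 2 * η₀)] at this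
  have hb : ‖∫ η, h η‖ ≤ M * (2 * η₀) + 24 := by
    rw [hint, hsum]
    exact (norm_add_le _ _).trans
      (add_le_add hb1 (norm_integral_modelIntegrand_le ht hη₀ y))
  have hpi : ‖(2 * Real.pi : ℂ)⁻¹‖ ≤ 1 := by
    rw [norm_inv, norm_mul, Complex.norm_real, Real.norm_of_nonneg Real.pi_pos.le,
      Complex.norm_ofNat]
    exact inv_le_one_of_one_le₀ (by linarith [Real.pi_gt_three])
  change ‖(2 * Real.pi : ℂ)⁻¹ * ∫ η, h η‖ ≤ _
  rw [norm_mul]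
  exact (mul_le_of_le_one_left (norm_nonneg _) hpi).trans hb

/-- The convolution with `K₃(t,·)` is bounded from `L¹(ℝ)` to `L^∞(ℝ)` uniformly in `t > 0`. -/
theorem K3_convolution_estimate (η₀ : ℝ) (hη₀ : 0 < η₀) (χ : ℝ → ℝ) (hχ : IsCutoff η₀ χ) :
    ∃ C : ℝ, 0 < C ∧ ∀ t : ℝ, 0 < t → ∀ f : ℝ → ℝ, Integrable f →
      ∀ y : ℝ, ‖∫ z : ℝ, K3 χ t (y - z) * (f z : ℂ)‖ ≤ C * ∫ z : ℝ, |f z| := by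
  obtain ⟨C, hC, hK⟩ := exists_norm_K3_le hη₀ hχ
  refine ⟨C, hC, fun t ht f hf y => ?_⟩
  rw [← integral_const_mul]
  refine norm_integral_le_of_norm_le (hf.abs.const_mul C) (Filter.Eventually.of_forall fun z => ?_)
  rw [norm_mul, Complex.norm_real, Real.norm_eq_abs]
  gcongr
  exact hK t ht _
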